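/- Let H be an infinite-dimensional separable complex Hilbert space, (Ω, 𝔐, μ) a measure space, φ and Φ as in the context, and 𝒜 : Ω → B(H) such that t ↦ ⟨𝒜_t x, y⟩ is measurable for all x, y ∈ H, such that for μ-almost every t one has Φ((⟨𝒜_t e_n, f_n⟩)_{n=1}^∞) < +∞ for every pair of orthonormal sequences (e_n), (f_n) in H, and such that for every pair of orthonormal sequences (e_n)_{n=1}^∞ and (f_n)_{n=1}^∞ in H one has ∫_Ω Φ((⟨𝒜_t e_n, f_n⟩)_{n=1}^∞) dμ(t) < +∞. Then sup { ∫_Ω Φ((⟨𝒜_t e_n, f_n⟩)_{n=1}^∞) dμ(t) : (e_n), (f_n) orthonormal sequences in H } < +∞. -/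

import Mathlib

open MeasureTheory ENNReal

/-- The extension `Φ` of a norm `φ` on finitely supported sequences to arbitrary
complex sequences: `Φ((a_n)) = sup_N φ(a_0, …, a_{N-1}, 0, 0, …) ∈ [0, ∞]`. -/
noncomputable def Phi (φ : (ℕ →₀ ℂ) → ℝ) (a : ℕ → ℂ) : ℝ≥0∞ :=
  ⨆ N : ℕ, ENNReal.ofReal (φ (∑ n ∈ Finset.range N, Finsupp.single n (a n)))

open Filter Topology

/-- Uniform boundedness for an extended-real-valued lower semicontinuous finite seminorm. -/
lemma aux_bound {V : Type*} [NormedAddCommGroup V] [NormedSpace ℂ V] [CompleteSpace V]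
    (G : V → ℝ≥0∞) (hadd : ∀ x y, G (x + y) ≤ G x + G y)
    (hsmul : ∀ (c : ℂ) x, G (c • x) = ENNReal.ofReal ‖c‖ * G x)
    (hlsc : LowerSemicontinuous G) (hfin : ∀ x, G x < ⊤) :
    ∃ C : ℝ, ∀ x, ‖x‖ ≤ 1 → G x ≤ ENNReal.ofReal C := by
  let p : Seminorm ℂ V := Seminorm.of (fun x => (G x).toReal)
    (fun x y => by
      rw [← ENNReal.toReal_add (hfin x).ne (hfin y).ne]
      exact ENNReal.toReal_mono (ENNReal.add_lt_top.2 ⟨hfin x, hfin y⟩).ne (hadd x y))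
    (fun c x => by simp [hsmul])
  have hp : LowerSemicontinuous p := by
    rw [lowerSemicontinuous_iff_isClosed_preimage] at hlsc ⊢
    intro y
    by_cases hy : 0 ≤ y
    · convert hlsc (ENNReal.ofReal y) using 1
      ext x
      exact (ENNReal.le_ofReal_iff_toReal_le (hfin x).ne hy).symm
    · convert isClosed_empty
      ext x
      simp only [Set.mem_preimage, Set.mem_Iic, Set.mem_empty_iff_false, iff_false, not_le]
      exact (not_le.1 hy).trans_le (apply_nonneg p x)
  obtain ⟨C, hC, h⟩ := Seminorm.bound_of_continuous_normedSpace p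
    (p.continuous_of_lowerSemicontinuous hp)
  refine ⟨C, fun x hx => ?_⟩
  rw [ENNReal.le_ofReal_iff_toReal_le (hfin x).ne hC.le]
  exact (h x).trans (by nlinarith)

section
variable {φ : (ℕ →₀ ℂ) → ℝ}

lemma Phi_lsc (hφ_def : ∀ a, φ a = 0 ↔ a = 0)
    (hφ_add : ∀ a b, φ (a + b) ≤ φ a + φ b)
    (hφ_smul : ∀ (c : ℂ) (a), φ (c • a) = ‖c‖ * φ a) : LowerSemicontinuous (Phi φ) := by
  have hsum : ∀ (N : ℕ) (a : ℕ → ℂ), φ (∑ n ∈ Finset.range N, Finsupp.single n (a n)) ≤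
      ∑ n ∈ Finset.range N, ‖a n‖ * φ (Finsupp.single n 1) := by
    intro N a
    induction N with
    | zero => simp [(hφ_def 0).2 rfl]
    | succ N ih =>
      rw [Finset.sum_range_succ, Finset.sum_range_succ]
      refine (hφ_add _ _).trans (add_le_add ih (le_of_eq ?_))
      rw [← hφ_smul]
      simp
  have hneg : ∀ a b, φ (a - b) = φ (b - a) := by
    intro a b
    have := hφ_smul (-1) (b - a)
    simpa using this
  have htri : ∀ a b, |φ a - φ b| ≤ φ (a - b) := by
    intro a b
    have h1 := hφ_add (a - b) b
    have h2 := hφ_add (b - a) a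
    rw [hneg b a] at h2
    simp only [sub_add_cancel] at h1 h2
    rw [abs_le]; constructor <;> linarith
  unfold Phi
  refine lowerSemicontinuous_iSup fun N => Continuous.lowerSemicontinuous ?_
  refine ENNReal.continuous_ofReal.comp ?_
  rw [continuous_iff_continuousAt]
  intro a
  rw [ContinuousAt, tendsto_iff_dist_tendsto_zero]
  refine squeeze_zero (g := fun b : ℕ → ℂ =>
    ∑ n ∈ Finset.range N, ‖b n - a n‖ * φ (Finsupp.single n 1))
    (fun _ => dist_nonneg) (fun b => ?_) ?_
  · rw [Real.dist_eq]
    refine (htri _ _).trans ?_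
    rw [← Finset.sum_sub_distrib]
    simp only [← Finsupp.single_sub]
    exact hsum N (fun n => b n - a n)
  · have : Continuous (fun b : ℕ → ℂ =>
      ∑ n ∈ Finset.range N, ‖b n - a n‖ * φ (Finsupp.single n 1)) := by fun_prop
    simpa using this.tendsto a

lemma Phi_add (hφ_nonneg : ∀ a, 0 ≤ φ a) (hφ_add : ∀ a b, φ (a + b) ≤ φ a + φ b)
    (a b : ℕ → ℂ) :
    Phi φ (fun n => a n + b n) ≤ Phi φ a + Phi φ b := by
  refine iSup_le fun N => ?_
  simp only [Finsupp.single_add, Finset.sum_add_distrib]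
  refine (ENNReal.ofReal_le_ofReal (hφ_add _ _)).trans ?_
  rw [ENNReal.ofReal_add (hφ_nonneg _) (hφ_nonneg _)]
  exact add_le_add (le_iSup (fun N : ℕ => ENNReal.ofReal
      (φ (∑ n ∈ Finset.range N, Finsupp.single n (a n)))) N)
    (le_iSup (fun N : ℕ => ENNReal.ofReal
      (φ (∑ n ∈ Finset.range N, Finsupp.single n (b n)))) N)

lemma Phi_smul (hφ_smul : ∀ (c : ℂ) (a), φ (c • a) = ‖c‖ * φ a) (c : ℂ) (a : ℕ → ℂ) :
    Phi φ (fun n => c * a n) = ENNReal.ofReal ‖c‖ * Phi φ a := by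
  unfold Phi
  rw [ENNReal.mul_iSup]
  refine iSup_congr fun N => ?_
  rw [← ENNReal.ofReal_mul (norm_nonneg c), ← hφ_smul, Finset.smul_sum]
  simp

end

lemma aux_partial_isometry {H : Type*} [NormedAddCommGroup H] [InnerProductSpace ℂ H]
    [CompleteSpace H] {b e : ℕ → H} (hb : Orthonormal ℂ b) (he : Orthonormal ℂ e) :
    ∃ S : H →L[ℂ] H, ‖S‖ ≤ 1 ∧ ∀ n, S (b n) = e n := by
  let Vb := hb.orthogonalFamily.linearIsometry
  let Ve := he.orthogonalFamily.linearIsometry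
  have h1 : ∀ n, Vb (lp.single 2 n (1 : ℂ)) = b n := fun n => by
    simp [Vb, OrthogonalFamily.linearIsometry_apply_single]
  have h2 : ∀ n, Ve (lp.single 2 n (1 : ℂ)) = e n := fun n => by
    simp [Ve, OrthogonalFamily.linearIsometry_apply_single]
  refine ⟨Ve.toContinuousLinearMap ∘L (ContinuousLinearMap.adjoint Vb.toContinuousLinearMap),
    ?_, fun n => ?_⟩
  · refine (ContinuousLinearMap.opNorm_comp_le _ _).trans ?_
    rw [LinearIsometryEquiv.norm_map]
    exact mul_le_one₀ Ve.norm_toContinuousLinearMap_le (norm_nonneg _)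
      Vb.norm_toContinuousLinearMap_le
  · rw [← h1 n, ← h2 n]
    have : ContinuousLinearMap.adjoint Vb.toContinuousLinearMap (Vb (lp.single 2 n (1 : ℂ)))
        = lp.single 2 n (1 : ℂ) := by
      refine ext_inner_left ℂ fun v => ?_
      rw [ContinuousLinearMap.adjoint_inner_right]
      exact Vb.inner_map_map _ _
    simp [this]

lemma aux_exists_orthonormal {H : Type*} [NormedAddCommGroup H] [InnerProductSpace ℂ H]
    [CompleteSpace H] (hinf : ¬ FiniteDimensional ℂ H) : ∃ b : ℕ → H, Orthonormal ℂ b := by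
  obtain ⟨w, b, -⟩ := exists_hilbertBasis ℂ H
  have : Infinite w := by
    by_contra h
    rw [not_infinite_iff_finite] at h
    have := Fintype.ofFinite w
    exact hinf b.toOrthonormalBasis.toBasis.finiteDimensional_of_finite
  exact ⟨_, b.orthonormal.comp _ (Infinite.natEmbedding w).injective⟩

lemma aux_unitary {H : Type*} [NormedAddCommGroup H] [InnerProductSpace ℂ H]
    [CompleteSpace H] {b : ℕ → H} (hb : Orthonormal ℂ b) (u : unitary (H →L[ℂ] H)) :
    Orthonormal ℂ (fun n => (u : H →L[ℂ] H) (b n)) := by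
  rw [orthonormal_iff_ite] at hb ⊢
  intro i j
  rw [ContinuousLinearMap.inner_map_map_of_mem_unitary u.2, hb]

/-- Finiteness on unitaries implies finiteness everywhere. -/
lemma aux_fin {H : Type*} [NormedAddCommGroup H] [InnerProductSpace ℂ H]
    [CompleteSpace H]
    (G : (H →L[ℂ] H) → ℝ≥0∞) (hadd : ∀ x y, G (x + y) ≤ G x + G y)
    (hsmul : ∀ (c : ℂ) x, G (c • x) = ENNReal.ofReal ‖c‖ * G x)
    (hu : ∀ u : unitary (H →L[ℂ] H), G u < ⊤) (x) : G x < ⊤ := by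
  obtain ⟨u, c, h, -⟩ := CStarAlgebra.exists_sum_four_unitary x
  rw [h, Fin.sum_univ_four]
  have key : ∀ i, G (c i • (u i : H →L[ℂ] H)) < ⊤ := fun i => by
    rw [hsmul]; exact ENNReal.mul_lt_top ENNReal.ofReal_lt_top (hu _)
  have hadd' : ∀ x y, G x < ⊤ → G y < ⊤ → G (x + y) < ⊤ := fun x y hx hy =>
    (hadd x y).trans_lt (ENNReal.add_lt_top.2 ⟨hx, hy⟩)
  exact hadd' _ _ (hadd' _ _ (hadd' _ _ (key _) (key _)) (key _)) (key _)

/-- Uniform boundedness for a separately lower semicontinuous sesquilinear-type gauge. -/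
lemma aux_double {H : Type*} [NormedAddCommGroup H] [InnerProductSpace ℂ H] [CompleteSpace H]
    (F : (H →L[ℂ] H) → (H →L[ℂ] H) → ℝ≥0∞)
    (haddl : ∀ T S S', F (S + S') T ≤ F S T + F S' T)
    (haddr : ∀ S T T', F S (T + T') ≤ F S T + F S T')
    (hsmull : ∀ T (c : ℂ) S, F (c • S) T = ENNReal.ofReal ‖c‖ * F S T)
    (hsmulr : ∀ S (c : ℂ) T, F S (c • T) = ENNReal.ofReal ‖c‖ * F S T)
    (hlscl : ∀ T, LowerSemicontinuous (fun S => F S T))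
    (hlscr : ∀ S, LowerSemicontinuous (fun T => F S T))
    (huu : ∀ u v : unitary (H →L[ℂ] H), F u v < ⊤) :
    ∃ C : ℝ, ∀ S T, ‖S‖ ≤ 1 → ‖T‖ ≤ 1 → F S T ≤ ENNReal.ofReal C := by
  have hfin : ∀ S T, F S T < ⊤ := fun S T =>
    aux_fin (fun S => F S T) (haddl T) (hsmull T)
      (fun u => aux_fin (fun T => F u T) (haddr u) (hsmulr u) (huu u) T) S
  let G : (H →L[ℂ] H) → ℝ≥0∞ := fun T => ⨆ S : {S : H →L[ℂ] H // ‖S‖ ≤ 1}, F S T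
  obtain ⟨C, hC⟩ := aux_bound G
    (fun T T' => iSup_le fun S => (haddr S T T').trans (add_le_add
      (le_iSup (fun S : {S : H →L[ℂ] H // ‖S‖ ≤ 1} => F S T) S)
      (le_iSup (fun S : {S : H →L[ℂ] H // ‖S‖ ≤ 1} => F S T') S)))
    (fun c T => by simp only [G, hsmulr, ENNReal.mul_iSup])
    (lowerSemicontinuous_iSup fun S => hlscr S)
    (fun T => by
      obtain ⟨C, hC⟩ := aux_bound (fun S => F S T) (haddl T) (hsmull T) (hlscl T)
        (fun S => hfin S T)
      have hG : G T ≤ ENNReal.ofReal C := iSup_le fun S => hC S.1 S.2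
      exact hG.trans_lt ENNReal.ofReal_lt_top)
  exact ⟨C, fun S T hS hT => (le_iSup (fun S : {S : H →L[ℂ] H // ‖S‖ ≤ 1} => F S T)
    ⟨S, hS⟩).trans (hC T hT)⟩

/-- let `φ` be a symmetric norming function and `Φ` its extension.
If `𝒜 : Ω → B(H)` has measurable matrix coefficients, `Φ((⟨𝒜_t e_n, f_n⟩)_n) < ∞`
for a.e. `t` and all orthonormal sequences, and
`∫_Ω Φ((⟨𝒜_t e_n, f_n⟩)_n) dμ < ∞` for every pair of orthonormal sequences, then
`sup { ∫_Ω Φ((⟨𝒜_t e_n, f_n⟩)_n) dμ : (e_n), (f_n) orthonormal } < ∞`. -/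
theorem stmt14 (H : Type*) [NormedAddCommGroup H] [InnerProductSpace ℂ H]
    [CompleteSpace H] [TopologicalSpace.SeparableSpace H]
    (hinf : ¬ FiniteDimensional ℂ H)
    {Ω : Type*} [MeasurableSpace Ω] (μ : Measure Ω)
    (φ : (ℕ →₀ ℂ) → ℝ)
    (hφ_nonneg : ∀ a, 0 ≤ φ a)
    (hφ_def : ∀ a, φ a = 0 ↔ a = 0)
    (hφ_add : ∀ a b, φ (a + b) ≤ φ a + φ b)
    (hφ_smul : ∀ (c : ℂ) (a), φ (c • a) = ‖c‖ * φ a)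
    (hφ_one : φ (Finsupp.single 0 1) = 1)
    (hφ_perm : ∀ (σ : Equiv.Perm ℕ) (a), φ (Finsupp.equivMapDomain σ a) = φ a)
    (hφ_abs : ∀ a, φ (Finsupp.mapRange (fun z : ℂ => (‖z‖ : ℂ)) (by simp) a) = φ a)
    (hφ_mono : ∀ a b : ℕ →₀ ℂ, (∀ n, ‖a n‖ ≤ ‖b n‖) → φ a ≤ φ b)
    (𝒜 : Ω → (H →L[ℂ] H))
    (hmeas : ∀ x y : H, Measurable (fun t => (inner ℂ y (𝒜 t x) : ℂ)))
    (hae : ∀ᵐ t ∂μ, ∀ e f : ℕ → H, Orthonormal ℂ e → Orthonormal ℂ f →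
      Phi φ (fun n => (inner ℂ (f n) (𝒜 t (e n)) : ℂ)) < ⊤)
    (hON : ∀ e f : ℕ → H, Orthonormal ℂ e → Orthonormal ℂ f →
      ∫⁻ t, Phi φ (fun n => (inner ℂ (f n) (𝒜 t (e n)) : ℂ)) ∂μ < ⊤) :
    sSup {r : ℝ≥0∞ | ∃ e f : ℕ → H, Orthonormal ℂ e ∧ Orthonormal ℂ f ∧
      r = ∫⁻ t, Phi φ (fun n => (inner ℂ (f n) (𝒜 t (e n)) : ℂ)) ∂μ} < ⊤ := by
  obtain ⟨b, hb⟩ := aux_exists_orthonormal hinf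
  have hlscΦ := Phi_lsc hφ_def hφ_add hφ_smul
  let K : (H →L[ℂ] H) → (H →L[ℂ] H) → Ω → ℕ → ℂ :=
    fun S T t n => inner ℂ (T (b n)) (𝒜 t (S (b n)))
  have hKmeas : ∀ S T, Measurable (fun t => Phi φ (K S T t)) := fun S T =>
    hlscΦ.measurable.comp (measurable_pi_lambda _ fun n => hmeas _ _)
  let F : (H →L[ℂ] H) → (H →L[ℂ] H) → ℝ≥0∞ := fun S T => ∫⁻ t, Phi φ (K S T t) ∂μ
  have haddl : ∀ T S S', F (S + S') T ≤ F S T + F S' T := by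
    intro T S S'
    simp only [F]
    rw [← lintegral_add_left (hKmeas _ _)]
    refine lintegral_mono fun t => ?_
    refine le_trans (le_of_eq ?_) (Phi_add hφ_nonneg hφ_add _ _)
    congr 1; ext n; simp [K]
  have haddr : ∀ S T T', F S (T + T') ≤ F S T + F S T' := by
    intro S T T'
    simp only [F]
    rw [← lintegral_add_left (hKmeas _ _)]
    refine lintegral_mono fun t => ?_
    refine le_trans (le_of_eq ?_) (Phi_add hφ_nonneg hφ_add _ _)
    congr 1; ext n; simp [K]
  have hsmull : ∀ T (c : ℂ) S, F (c • S) T = ENNReal.ofReal ‖c‖ * F S T := by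
    intro T c S
    simp only [F]
    rw [← lintegral_const_mul _ (hKmeas _ _)]
    refine lintegral_congr fun t => ?_
    rw [← Phi_smul hφ_smul]
    congr 1; ext n; simp [K]
  have hsmulr : ∀ S (c : ℂ) T, F S (c • T) = ENNReal.ofReal ‖c‖ * F S T := by
    intro S c T
    simp only [F]
    rw [← lintegral_const_mul _ (hKmeas _ _)]
    refine lintegral_congr fun t => ?_
    rw [← RCLike.norm_conj, ← Phi_smul hφ_smul]
    congr 1; ext n; simp [K, mul_comm]
  have hlsc : ∀ (X : (H →L[ℂ] H) → (H →L[ℂ] H) × (H →L[ℂ] H)), Continuous X →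
      LowerSemicontinuous (fun S => F (X S).1 (X S).2) := by
    intro X hX
    rw [lowerSemicontinuous_iff_le_liminf]
    intro S
    refine le_trans (lintegral_mono fun t => ?_)
      (lintegral_liminf_le (u := 𝓝 S) fun S' => hKmeas (X S').1 (X S').2)
    have hc : Continuous (fun S => K (X S).1 (X S).2 t) := by
      refine continuous_pi fun n => ?_
      simp only [K]
      fun_prop
    have := hlscΦ.comp hc
    exact (lowerSemicontinuous_iff_le_liminf.1 this) S
  have hlscl : ∀ T, LowerSemicontinuous (fun S => F S T) := fun T =>
    hlsc (fun S => (S, T)) (by fun_prop)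
  have hlscr : ∀ S, LowerSemicontinuous (fun T => F S T) := fun S =>
    hlsc (fun T => (S, T)) (by fun_prop)
  have huu : ∀ u v : unitary (H →L[ℂ] H), F u v < ⊤ := fun u v =>
    hON _ _ (aux_unitary hb u) (aux_unitary hb v)
  obtain ⟨C, hC⟩ := aux_double F haddl haddr hsmull hsmulr hlscl hlscr huu
  refine lt_of_le_of_lt (sSup_le ?_) (ENNReal.ofReal_lt_top (r := C))
  rintro r ⟨e, f, he, hf, rfl⟩
  obtain ⟨S, hS, hSe⟩ := aux_partial_isometry hb he
  obtain ⟨T, hT, hTf⟩ := aux_partial_isometry hb hf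
  refine le_trans (le_of_eq ?_) (hC S T hS hT)
  simp only [F, K, hSe, hTf]
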